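/- Let Ω ⊂ ℂ be a bounded, open, simply connected set whose frontier Γ = ∂Ω equals the image of an injective, twice continuously differentiable map γ : S¹ → ℂ, and let ξ, η : closure(Ω) → ℝ be continuous on closure(Ω), harmonic on Ω, with ξ(γ(e^{iθ})) = cos θ and η(γ(e^{iθ})) = sin θ for all θ. Then at every point p ∈ Ω the gradients ∇ξ(p) and ∇η(p) are linearly independent vectors in ℝ²; equivalently, for every (α, β) ∈ ℝ² with (α, β) ≠ (0, 0) and every p ∈ Ω, α∇ξ(p) + β∇η(p) ≠ 0. -/

import Mathlib

open Complex Metric Set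

/-- A real-valued function on `ℂ ≅ ℝ²` is harmonic on an open set `U` if it is twice
continuously differentiable on `U` and its Laplacian vanishes identically on `U`. -/
def HarmonicOnSet (f : ℂ → ℝ) (U : Set ℂ) : Prop :=
  ContDiffOn ℝ 2 f U ∧
    ∀ p ∈ U,
      fderiv ℝ (fun z => fderiv ℝ f z 1) p 1 +
        fderiv ℝ (fun z => fderiv ℝ f z Complex.I) p Complex.I = 0

/-!
Put `u = α ξ + β η`, whose boundary values `u (γ z) = ⟪w, z⟫` with `w = α + β i` have one maximal
and one minimal arc: their superlevel and sublevel sets are arcs. Suppose `∇u p = 0`. Near `p` the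
function `u - u p` is the real part of a holomorphic function vanishing to order `n ≥ 2`, so around
`p` there are at least four sectors on which its sign alternates (Radó). By the maximum principle
each positive sector is joined to the boundary inside `{u > u p}`, hence any two of them are joined
inside `{u > u p}` through a boundary arc; likewise any two negative sectors inside `{u < u p}`.
Two such paths would have to cross.

The crossing needs no Jordan curve theorem. For disjoint paths `P` from `a₁` to `a₂` and `R` from
`b₁` to `b₂`, a continuous logarithm of `P s - R t` on the square has an alternating sum over the
corners that can be computed by varying `s` first or `t` first; both increments are given by
principal logarithms because `P` avoids the segments `[p, bᵢ]` and `R` the segments `[p, aᵢ]`. For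
endpoints alternating around `p` the two values differ by `2πi`.
-/

open InnerProductSpace
open scoped Topology ComplexConjugate

/-! ### Crossing paths -/

theorem sub_eq_sub_of_exp_eq {X : Type*} [TopologicalSpace X] [PreconnectedSpace X]
    {F G : X → ℂ} (hF : Continuous F) (hG : Continuous G)
    (h : ∀ x, exp (F x) = exp (G x)) (x y : X) : F x - F y = G x - G y := by
  have hconst : F x - G x = F y - G y :=
    isCoveringMap_exp.const_of_comp (hF.sub hG) (fun _ _ ↦ Subtype.ext <| by simp [exp_sub, h]) x y
  linear_combination hconst

theorem sub_div_sub_mem_slitPlane {p b z : ℂ} (hz : z ∉ segment ℝ p b) :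
    (z - b) / (z - p) ∈ slitPlane := by
  contrapose! hz
  obtain ⟨x, hx, hxz⟩ : ∃ x : ℝ, 0 ≤ x ∧ (z - b) / (z - p) = -x := by
    rw [mem_slitPlane_iff_not_le_zero, not_not, Complex.le_def] at hz
    exact ⟨-((z - b) / (z - p)).re, by simpa using hz.1,
      Complex.ext (by simp) (by simpa using hz.2)⟩
  rcases eq_or_ne z p with rfl | hzp
  · exact left_mem_segment ℝ z b
  have hx1 : (1 + x : ℂ) ≠ 0 := by exact_mod_cast (by positivity : (1 + x : ℝ) ≠ 0)
  rw [div_eq_iff (sub_ne_zero.2 hzp)] at hxz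
  refine ⟨x / (1 + x), 1 / (1 + x), by positivity, by positivity, by field_simp; ring, ?_⟩
  simp only [real_smul, ofReal_div, ofReal_add, ofReal_one]
  field_simp
  linear_combination -hxz

theorem one_add_mem_slitPlane {y : ℂ} (hy : y ∈ slitPlane) : 1 + y ∈ slitPlane := by
  rw [mem_slitPlane_iff] at hy ⊢
  exact hy.imp (fun h ↦ by simpa using add_pos one_pos h) (fun h ↦ by simpa using h)

theorem inv_mem_slitPlane {y : ℂ} (hy : y ∈ slitPlane) : y⁻¹ ∈ slitPlane := by
  rw [mem_slitPlane_iff_arg] at hy ⊢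
  simp [arg_inv, hy.1, hy.2, neg_eq_iff_eq_neg, (neg_pi_lt_arg y).ne']

theorem mem_slitPlane_of_one_add_of_one_add_inv {y : ℂ} (hy : y ≠ 0) (h : 1 + y ∈ slitPlane)
    (hinv : 1 + y⁻¹ ∈ slitPlane) : y ∈ slitPlane := by
  contrapose! hinv
  obtain ⟨x, rfl⟩ : ∃ x : ℝ, (x : ℂ) = y :=
    ⟨y.re, Complex.ext rfl (by_contra fun h ↦ hinv (Or.inr (Ne.symm h)))⟩
  norm_cast at *
  rw [ofReal_mem_slitPlane] at *
  have hneg : x < 0 := lt_of_le_of_ne (not_lt.1 hinv) hy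
  have : x⁻¹ < -1 := by
    rw [inv_lt_of_neg hneg (by norm_num)]
    norm_num
    linarith
  linarith

theorem log_one_add_sub_log_one_add_inv {y : ℂ} (hy : y ∈ slitPlane) :
    log (1 + y) - log (1 + y⁻¹) = log y := by
  have : PreconnectedSpace slitPlane := isPreconnected_iff_preconnectedSpace.1
    (starConvex_one_slitPlane.isPathConnected one_mem_slitPlane).isConnected.isPreconnected
  have hinv (z : slitPlane) : 1 + (z : ℂ)⁻¹ ∈ slitPlane :=
    one_add_mem_slitPlane (inv_mem_slitPlane z.2)
  have hne (z : slitPlane) : (z : ℂ) ≠ 0 := slitPlane_ne_zero z.2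
  have hF : Continuous fun z : slitPlane ↦ log (1 + z) - log (1 + (z : ℂ)⁻¹) :=
    ((by fun_prop : Continuous _).clog fun z ↦ one_add_mem_slitPlane z.2).sub
      ((continuous_const.add (continuous_subtype_val.inv₀ hne)).clog hinv)
  have hG : Continuous fun z : slitPlane ↦ log (z : ℂ) := continuous_subtype_val.clog fun z ↦ z.2
  have hexp (z : slitPlane) : exp (log (1 + z) - log (1 + (z : ℂ)⁻¹)) = exp (log z) := by
    rw [exp_sub, exp_log (slitPlane_ne_zero <| one_add_mem_slitPlane z.2),
      exp_log (slitPlane_ne_zero <| hinv z), exp_log (hne z),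
      div_eq_iff (slitPlane_ne_zero <| hinv z), mul_add, mul_inv_cancel₀ (hne z), mul_one, add_comm]
  simpa using sub_eq_sub_of_exp_eq hF hG hexp ⟨y, hy⟩ ⟨1, one_mem_slitPlane⟩

theorem log_sub_div_sub_sub_log_sub_div_sub {p a b : ℂ} (ha : a ∉ segment ℝ p b)
    (hb : b ∉ segment ℝ p a) :
    log ((a - b) / (a - p)) - log ((b - a) / (b - p)) = log (-((b - p) / (a - p))) := by
  have hap : a - p ≠ 0 := sub_ne_zero.2 fun h ↦ ha (h ▸ left_mem_segment ℝ p b)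
  have hbp : b - p ≠ 0 := sub_ne_zero.2 fun h ↦ hb (h ▸ left_mem_segment ℝ p a)
  set y := -((b - p) / (a - p)) with hy
  have hab : (a - b) / (a - p) = 1 + y := by rw [hy]; field_simp; ring
  have hba : (b - a) / (b - p) = 1 + y⁻¹ := by rw [hy, inv_neg, inv_div]; field_simp; ring
  have hy0 : y ≠ 0 := neg_ne_zero.2 (div_ne_zero hbp hap)
  rw [hab, hba]
  exact log_one_add_sub_log_one_add_inv <| mem_slitPlane_of_one_add_of_one_add_inv hy0
    (hab ▸ sub_div_sub_mem_slitPlane ha) (hba ▸ sub_div_sub_mem_slitPlane hb)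

theorem log_sub_div_sub_path_increment {X : Type*} [TopologicalSpace X] [PreconnectedSpace X]
    {P Φ : X → ℂ} (hP : Continuous P) (hΦ : Continuous Φ) {p b₁ b₂ : ℂ}
    (h₁ : ∀ x, P x ∉ segment ℝ p b₁) (h₂ : ∀ x, P x ∉ segment ℝ p b₂)
    (hexp : ∀ x, exp (Φ x) * (P x - b₁) = P x - b₂) (x y : X) :
    Φ x - Φ y = (log ((P x - b₂) / (P x - p)) - log ((P x - b₁) / (P x - p))) -
      (log ((P y - b₂) / (P y - p)) - log ((P y - b₁) / (P y - p))) := by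
  have hp (x) : P x - p ≠ 0 := sub_ne_zero.2 fun h ↦ h₁ x (h ▸ left_mem_segment ℝ p b₁)
  have hlog {b : ℂ} (hb : ∀ x, P x ∉ segment ℝ p b) :
      Continuous fun x ↦ log ((P x - b) / (P x - p)) :=
    ((hP.sub continuous_const).div (hP.sub continuous_const) hp).clog fun x ↦
      sub_div_sub_mem_slitPlane (hb x)
  refine sub_eq_sub_of_exp_eq hΦ ((hlog h₂).fun_sub (hlog h₁)) (fun x ↦ ?_) x y
  have hb₁ : P x - b₁ ≠ 0 := sub_ne_zero.2 fun h ↦ h₁ x (h ▸ right_mem_segment ℝ p b₁)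
  rw [exp_sub, exp_log (slitPlane_ne_zero <| sub_div_sub_mem_slitPlane (h₂ x)),
    exp_log (slitPlane_ne_zero <| sub_div_sub_mem_slitPlane (h₁ x)),
    div_div_div_cancel_right₀ (hp x), eq_div_iff hb₁, hexp]

theorem exists_continuous_exp_eq {X : Type*} [TopologicalSpace X] [SimplyConnectedSpace X]
    [LocallyPathConnectedSpace X] {g : X → ℂ} (hg : Continuous g) (h₀ : ∀ x, g x ≠ 0) :
    ∃ L : X → ℂ, Continuous L ∧ ∀ x, exp (L x) = g x := by
  have x₀ : X := Classical.arbitrary X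
  obtain ⟨L, ⟨-, hL⟩, -⟩ := isCoveringMapOn_exp.existsUnique_continuousMap_lifts
    (⟨g, hg⟩ : C(X, ℂ)) (exp_log (h₀ x₀)) h₀
  exact ⟨L, L.continuous, congrFun hL⟩

theorem alternating_sum_log_eq_zero {S T : Set ℂ} {p a₁ a₂ b₁ b₂ : ℂ} (hST : Disjoint S T)
    (hS : JoinedIn S a₁ a₂) (hT : JoinedIn T b₁ b₂)
    (hSb₁ : Disjoint S (segment ℝ p b₁)) (hSb₂ : Disjoint S (segment ℝ p b₂))
    (hTa₁ : Disjoint T (segment ℝ p a₁)) (hTa₂ : Disjoint T (segment ℝ p a₂)) :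
    log (-((b₂ - p) / (a₂ - p))) - log (-((b₁ - p) / (a₂ - p))) -
      log (-((b₂ - p) / (a₁ - p))) + log (-((b₁ - p) / (a₁ - p))) = 0 := by
  obtain ⟨P, hP, hP₀, hP₁, hPS⟩ : ∃ P : ℝ → ℂ, Continuous P ∧ P 0 = a₁ ∧ P 1 = a₂ ∧ ∀ s, P s ∈ S :=
    ⟨hS.somePath.extend, hS.somePath.extend.continuous, by simp, by simp, fun s ↦ hS.somePath_mem _⟩
  obtain ⟨R, hR, hR₀, hR₁, hRT⟩ : ∃ R : ℝ → ℂ, Continuous R ∧ R 0 = b₁ ∧ R 1 = b₂ ∧ ∀ t, R t ∈ T :=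
    ⟨hT.somePath.extend, hT.somePath.extend.continuous, by simp, by simp, fun t ↦ hT.somePath_mem _⟩
  obtain ⟨L, hL, hexp⟩ := exists_continuous_exp_eq
    (by fun_prop : Continuous fun x : ℝ × ℝ ↦ P x.1 - R x.2)
    fun x ↦ sub_ne_zero.2 (hST.ne_of_mem (hPS x.1) (hRT x.2))
  -- The increment in `s` of the increment in `t` of `L` equals the increment in `t` of that in `s`.
  have hs := log_sub_div_sub_path_increment (Φ := fun s ↦ L (s, 1) - L (s, 0)) hP (by fun_prop)
    (fun s ↦ hSb₁.notMem_of_mem_left (hPS s)) (fun s ↦ hSb₂.notMem_of_mem_left (hPS s))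
    (fun s ↦ by rw [← hR₀, ← hR₁, ← hexp (s, 0), ← exp_add, sub_add_cancel, hexp]) 1 0
  have ht := log_sub_div_sub_path_increment (Φ := fun t ↦ L (1, t) - L (0, t)) hR (by fun_prop)
    (fun t ↦ hTa₁.notMem_of_mem_left (hRT t)) (fun t ↦ hTa₂.notMem_of_mem_left (hRT t))
    (fun t ↦ by
      rw [← hP₀, ← hP₁, ← neg_sub (P 0), ← neg_sub (P 1), ← hexp (0, t), mul_neg, ← exp_add,
        sub_add_cancel, hexp]) 1 0
  have hswap {a b : ℂ} (ha : a ∈ S) (hb : b ∈ T) (hSb : Disjoint S (segment ℝ p b))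
      (hTa : Disjoint T (segment ℝ p a)) := log_sub_div_sub_sub_log_sub_div_sub
    (hSb.notMem_of_mem_left ha) (hTa.notMem_of_mem_left hb)
  rw [← hswap hS.target_mem hT.target_mem hSb₂ hTa₂, ← hswap hS.target_mem hT.source_mem hSb₁ hTa₂,
    ← hswap hS.source_mem hT.target_mem hSb₂ hTa₁, ← hswap hS.source_mem hT.source_mem hSb₁ hTa₁]
  rw [hP₀, hP₁] at hs
  rw [hR₀, hR₁] at ht
  linear_combination ht - hs

theorem log_neg_exp_mul_I {t : ℝ} (ht : t ∈ Ioo 0 (2 * Real.pi)) :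
    log (-exp (t * I)) = (t - Real.pi) * I := by
  have hexp : -exp (t * I) = exp ((t - Real.pi) * I) := by
    rw [sub_mul, exp_sub, exp_pi_mul_I, div_neg, div_one]
  rw [hexp, log_exp] <;> simp <;> linarith [ht.1, ht.2]

theorem not_joinedIn_of_alternating {S T : Set ℂ} (hST : Disjoint S T) {p : ℂ} {r : ℝ} (hr : r ≠ 0)
    {θ : Fin 4 → ℝ} (hθ : StrictMono θ) (hθ₃ : θ 3 < θ 0 + 2 * Real.pi)
    (hS : ∀ k ∈ ({1, 3} : Set (Fin 4)), Disjoint S (segment ℝ p (circleMap p r (θ k))))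
    (hT : ∀ k ∈ ({0, 2} : Set (Fin 4)), Disjoint T (segment ℝ p (circleMap p r (θ k))))
    (hjS : JoinedIn S (circleMap p r (θ 0)) (circleMap p r (θ 2))) :
    ¬ JoinedIn T (circleMap p r (θ 1)) (circleMap p r (θ 3)) := by
  intro hjT
  have hsum := alternating_sum_log_eq_zero hST hjS hjT (hS 1 (by simp)) (hS 3 (by simp))
    (hT 0 (by simp)) (hT 2 (by simp))
  have hdiv (α β : ℝ) : (circleMap p r β - p) / (circleMap p r α - p) = exp (↑(β - α) * I) := by
    rw [circleMap_sub_center, circleMap_sub_center, circleMap, circleMap, zero_add, zero_add,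
      mul_div_mul_left _ _ (ofReal_ne_zero.2 hr), ← exp_sub, ofReal_sub, sub_mul]
  -- Only this angle is negative; bringing it into `(0, 2π)` leaves `2πi` in the alternating sum.
  have hturn : exp (↑(θ 1 - θ 2) * I) = exp (↑(θ 1 - θ 2 + 2 * Real.pi) * I) := by
    rw [ofReal_add, add_mul, exp_add]
    simp
  have h₀₁ : θ 0 < θ 1 := hθ (by decide)
  have h₁₂ : θ 1 < θ 2 := hθ (by decide)
  have h₂₃ : θ 2 < θ 3 := hθ (by decide)
  simp only [hdiv] at hsum
  rw [hturn, log_neg_exp_mul_I ⟨by linarith, by linarith⟩,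
    log_neg_exp_mul_I ⟨by linarith, by linarith⟩, log_neg_exp_mul_I ⟨by linarith, by linarith⟩,
    log_neg_exp_mul_I ⟨by linarith, by linarith⟩] at hsum
  refine two_pi_I_ne_zero ?_
  push_cast at hsum
  linear_combination -hsum

/-! ### Harmonic functions near a point -/

theorem HarmonicOnSet.harmonicOnNhd {f : ℂ → ℝ} {U : Set ℂ} (hf : HarmonicOnSet f U)
    (hU : IsOpen U) : HarmonicOnNhd f U := by
  intro x hx
  refine ⟨hf.1.contDiffAt (hU.mem_nhds hx), ?_⟩
  filter_upwards [hU.mem_nhds hx] with z hz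
  have hf₂ : ContDiffAt ℝ 2 f z := hf.1.contDiffAt (hU.mem_nhds hz)
  have hdf : DifferentiableAt ℝ (fderiv ℝ f) z :=
    (hf₂.fderiv_right (m := 1) (by norm_num)).differentiableAt one_ne_zero
  have hlap := hf.2 z hz
  rw [fderiv_clm_apply hdf (differentiableAt_const _),
    fderiv_clm_apply hdf (differentiableAt_const _)] at hlap
  simpa [laplacian_eq_iteratedFDeriv_complexPlane, iteratedFDeriv_two_apply] using hlap

theorem tendsto_circleMap_nhdsGT_zero (p : ℂ) (θ : ℝ) :
    Filter.Tendsto (fun t ↦ circleMap p t θ) (𝓝[>] 0) (𝓝 p) := by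
  have h : Continuous fun t ↦ circleMap p t θ := by unfold circleMap; fun_prop
  simpa [ContinuousWithinAt] using h.continuousWithinAt (s := Ioi 0) (x := 0)

theorem circleMap_zero_one_pow_mul_self {n : ℕ} (hn : n ≠ 0) (k : ℕ) (w : ℂ) :
    circleMap 0 1 (-arg w / n + k * (Real.pi / n)) ^ n * w = (-1) ^ k * ‖w‖ := by
  have hn' : (n : ℝ) ≠ 0 := by exact_mod_cast hn
  have hangle : n * (-arg w / n + k * (Real.pi / n)) = k * Real.pi + -arg w := by
    field_simp; ring
  have hw : w = ‖w‖ * exp (arg w * I) := (norm_mul_exp_arg_mul_I w).symm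
  rw [circleMap_zero_pow, one_pow, hangle, circleMap_zero, ofReal_one, one_mul, ofReal_add, add_mul,
    exp_add, ofReal_mul, ofReal_natCast, mul_assoc (k : ℂ), exp_nat_mul, exp_pi_mul_I, ofReal_neg,
    neg_mul, exp_neg]
  nth_rw 2 [hw]
  field_simp

theorem exists_alternating_rays_of_analyticOrderAt_eq {F : ℂ → ℂ} {p : ℂ} {n : ℕ}
    (hF : AnalyticAt ℂ F p) (hn : n ≠ 0) (hord : analyticOrderAt F p = n) :
    ∃ θ : ℝ, ∀ k : ℕ, ∀ᶠ t in 𝓝[>] 0,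
      0 < (-1) ^ k * (F (circleMap p t (θ + k * (Real.pi / n)))).re := by
  obtain ⟨g, hg, hgp, hFg⟩ := hF.analyticOrderAt_eq_natCast.1 hord
  refine ⟨-arg (g p) / n, fun k ↦ ?_⟩
  set φ := -arg (g p) / n + k * (Real.pi / n)
  have hp : 0 < ((-1) ^ k * (circleMap 0 1 φ ^ n * g p)).re := by
    rw [circleMap_zero_one_pow_mul_self hn, ← mul_assoc, ← mul_pow]
    simpa using hgp
  have hev : ∀ᶠ z in 𝓝 p, 0 < ((-1) ^ k * (circleMap 0 1 φ ^ n * g z)).re := by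
    have hc : ContinuousAt (fun z ↦ ((-1) ^ k * (circleMap 0 1 φ ^ n * g z)).re) p :=
      continuous_re.continuousAt.comp
        (continuousAt_const.mul (continuousAt_const.mul hg.continuousAt))
    exact hc.eventually_const_lt hp
  have hlim := tendsto_circleMap_nhdsGT_zero p φ
  filter_upwards [hlim.eventually hev, hlim.eventually hFg, self_mem_nhdsWithin] with t hpos hFt ht
  have hfactor : circleMap p t φ - p = t * circleMap 0 1 φ := by simp [circleMap]
  have hre : (-1) ^ k * (F (circleMap p t φ)).re =
      t ^ n * ((-1) ^ k * (circleMap 0 1 φ ^ n * g (circleMap p t φ))).re := by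
    rw [hFt, hfactor, ← re_ofReal_mul, ← re_ofReal_mul]
    push_cast
    congr 1
    simp only [smul_eq_mul]
    ring
  rw [hre]
  exact mul_pos (pow_pos ht n) hpos

theorem exists_analyticAt_re_eventuallyEq {v : ℂ → ℝ} {p : ℂ} (hv : HarmonicAt v p) :
    ∃ f : ℂ → ℂ, AnalyticAt ℂ f p ∧ (fun z ↦ (f z).re) =ᶠ[𝓝 p] v := by
  obtain ⟨ε, hε, hball⟩ := Metric.eventually_nhds_iff_ball.1 hv.eventually
  obtain ⟨f, hf, hfv⟩ := HarmonicOnNhd.exists_analyticOnNhd_ball_re_eq hball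
  exact ⟨f, hf p (mem_ball_self hε), hfv.eventuallyEq_of_mem (ball_mem_nhds p hε)⟩

theorem deriv_eq_zero_of_fderiv_re_eq_zero {f : ℂ → ℂ} {p : ℂ} (hf : DifferentiableAt ℂ f p)
    (hre : fderiv ℝ (fun z ↦ (f z).re) p = 0) : deriv f p = 0 := by
  have hre' := (reCLM.hasFDerivAt.comp p (hf.hasDerivAt.hasFDerivAt.restrictScalars ℝ)).fderiv
  have h : ∀ w : ℂ, (w * deriv f p).re = 0 := fun w ↦ by
    simpa using DFunLike.congr_fun (hre'.symm.trans hre) w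
  exact Complex.ext (by simpa using h 1) (by simpa using h I)

theorem exists_alternating_rays_of_harmonicAt {v : ℂ → ℝ} {p : ℂ} (hv : HarmonicAt v p)
    (hnc : ¬ ∀ᶠ z in 𝓝 p, v z = v p) :
    ∃ n : ℕ, n ≠ 0 ∧ (fderiv ℝ v p = 0 → 2 ≤ n) ∧ ∃ θ : ℝ, ∀ k : ℕ, ∀ᶠ t in 𝓝[>] 0,
      0 < (-1) ^ k * (v (circleMap p t (θ + k * (Real.pi / n))) - v p) := by
  obtain ⟨f, hf, hfv⟩ := exists_analyticAt_re_eventuallyEq hv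
  have hF : AnalyticAt ℂ (fun z ↦ f z - f p) p := hf.fun_sub analyticAt_const
  obtain ⟨n, hn⟩ : ∃ n : ℕ, analyticOrderAt (fun z ↦ f z - f p) p = n := by
    refine (ENat.ne_top_iff_exists.1 fun htop ↦ hnc ?_).imp fun _ ↦ Eq.symm
    filter_upwards [analyticOrderAt_eq_top.1 htop, hfv] with z hz hvz
    rw [← hvz, ← hfv.self_of_nhds, sub_eq_zero.1 hz]
  have hn0 : n ≠ 0 := by
    rintro rfl
    exact hF.analyticOrderAt_eq_zero.1 hn (sub_self _)
  refine ⟨n, hn0, fun hcrit ↦ ?_, ?_⟩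
  · have hderiv : analyticOrderAt (deriv f) p ≠ 0 := hf.deriv.analyticOrderAt_ne_zero.2 <|
      deriv_eq_zero_of_fderiv_re_eq_zero hf.differentiableAt (hfv.fderiv_eq.trans hcrit)
    have h2 : (1 + 1 : ℕ∞) ≤ n := by
      rw [← hn, ← hf.analyticOrderAt_deriv_add_one]
      gcongr
      exact Order.one_le_iff_pos.2 (pos_iff_ne_zero.2 hderiv)
    exact_mod_cast h2
  · obtain ⟨θ, hθ⟩ := exists_alternating_rays_of_analyticOrderAt_eq hF hn0 hn
    refine ⟨θ, fun k ↦ ?_⟩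
    filter_upwards [hθ k, (tendsto_circleMap_nhdsGT_zero p _).eventually hfv] with t ht hvt
    rwa [← hvt, ← hfv.self_of_nhds, ← sub_re]

theorem not_isLocalMax_of_harmonicAt {v : ℂ → ℝ} {p : ℂ} (hv : HarmonicAt v p)
    (hnc : ¬ ∀ᶠ z in 𝓝 p, v z = v p) : ¬ IsLocalMax v p := by
  intro hmax
  obtain ⟨n, -, -, θ, hθ⟩ := exists_alternating_rays_of_harmonicAt hv hnc
  obtain ⟨t, hle, hlt⟩ :=
    (((tendsto_circleMap_nhdsGT_zero p _).eventually hmax).and (hθ 0)).exists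
  rw [pow_zero, one_mul, sub_pos] at hlt
  exact hle.not_gt hlt

theorem eqOn_closure_of_harmonicOnNhd_of_eventually_eq {v : ℂ → ℝ} {Ω : Set ℂ}
    (hΩ : IsPreconnected Ω) (hv : HarmonicOnNhd v Ω) (hvc : ContinuousOn v (closure Ω)) {p : ℂ}
    (hp : p ∈ Ω) {c : ℝ} (h : ∀ᶠ z in 𝓝 p, v z = c) : EqOn v (fun _ ↦ c) (closure Ω) :=
  have hvA : AnalyticOnNhd ℝ v Ω := fun z hz ↦ HarmonicAt.analyticAt (hv z hz)
  (hvA.eqOn_of_preconnected_of_eventuallyEq analyticOnNhd_const hΩ hp h).of_subset_closure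
    hvc continuousOn_const subset_closure subset_rfl

theorem segment_circleMap (p : ℂ) {r : ℝ} (hr : 0 ≤ r) (φ : ℝ) :
    segment ℝ p (circleMap p r φ) = (fun t ↦ circleMap p t φ) '' Icc 0 r := by
  have hIcc : Icc 0 r = (fun s ↦ s * r) '' Icc 0 1 := by
    simp [image_mul_right_Icc zero_le_one hr]
  rw [segment_eq_image', hIcc, image_image]
  simp only [circleMap, add_sub_cancel_left, real_smul, ofReal_mul, mul_assoc]

theorem exists_segments_of_eventually_nhdsGT {p : ℂ} {m : ℕ} {φ : ℕ → ℝ} {Q : ℕ → ℂ → Prop}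
    (h : ∀ k < m, ∀ᶠ t in 𝓝[>] 0, Q k (circleMap p t (φ k))) :
    ∃ r > 0, ∀ k < m, ∀ z ∈ segment ℝ p (circleMap p r (φ k)), z ≠ p → Q k z := by
  have hall : ∀ᶠ t in 𝓝[>] 0, ∀ k ∈ Finset.range m, Q k (circleMap p t (φ k)) :=
    (Filter.eventually_all_finset _).2 fun k hk ↦ h k (Finset.mem_range.1 hk)
  obtain ⟨r, hr : 0 < r, hIoc⟩ := mem_nhdsGT_iff_exists_Ioc_subset.1 hall
  refine ⟨r, hr, fun k hk z hz hzp ↦ ?_⟩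
  rw [segment_circleMap p hr.le] at hz
  obtain ⟨t, ht, rfl⟩ := hz
  rcases ht.1.eq_or_lt with rfl | ht₀
  · simp at hzp
  · exact hIoc ⟨ht₀, ht.2⟩ k (Finset.mem_range.2 hk)

theorem exists_alternating_segments_of_fderiv_eq_zero {v : ℂ → ℝ} {p : ℂ} (hv : HarmonicAt v p)
    (hnc : ¬ ∀ᶠ z in 𝓝 p, v z = v p) (hcrit : fderiv ℝ v p = 0) {U : Set ℂ} (hU : U ∈ 𝓝 p) :
    ∃ r ≠ 0, ∃ θ : Fin 4 → ℝ, StrictMono θ ∧ θ 3 < θ 0 + 2 * Real.pi ∧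
      (∀ k, circleMap p r (θ k) ∈ U) ∧
      (∀ k ∈ ({0, 2} : Set (Fin 4)), ∀ z ∈ segment ℝ p (circleMap p r (θ k)), z ≠ p → v p < v z) ∧
      ∀ k ∈ ({1, 3} : Set (Fin 4)), ∀ z ∈ segment ℝ p (circleMap p r (θ k)), z ≠ p → v z < v p := by
  obtain ⟨n, -, hn, θ, hθ⟩ := exists_alternating_rays_of_harmonicAt hv hnc
  have hn2 : (2 : ℝ) ≤ n := by exact_mod_cast hn hcrit
  have hstep : 0 < Real.pi / n := div_pos Real.pi_pos (by linarith)
  have hstep_le : Real.pi / n ≤ Real.pi / 2 :=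
    div_le_div_of_nonneg_left Real.pi_pos.le two_pos hn2
  obtain ⟨r, hr, hseg⟩ := exists_segments_of_eventually_nhdsGT (m := 4)
    (Q := fun k z ↦ z ∈ U ∧ 0 < (-1) ^ k * (v z - v p))
    fun k _ ↦ ((tendsto_circleMap_nhdsGT_zero p _).eventually hU).and (hθ k)
  refine ⟨r, hr.ne', fun k ↦ θ + k.val * (Real.pi / n), fun j k hjk ↦ ?_, ?_, fun k ↦ ?_, ?_, ?_⟩
  · dsimp only
    gcongr
    exact hjk
  · norm_num
    linarith
  · exact (hseg k k.2 _ (right_mem_segment ℝ p _) (circleMap_ne_center hr.ne')).1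
  · rintro k (rfl | rfl) z hz hzp <;> simpa using (hseg _ (by norm_num) z hz hzp).2
  · rintro k (rfl | rfl) z hz hzp <;> simpa [pow_succ] using (hseg _ (by norm_num) z hz hzp).2

/-! ### Superlevel sets and the boundary -/

/-- Quasiconcavity along paths: every superlevel set `{z ∈ S | c < v z}` is path connected (or
empty). It replaces quasiconcavity, which asks for convex superlevel sets, on a set `S` such as a
closed curve, and describes boundary values without spurious local maxima. -/
def PathQuasiconcaveOn {X : Type*} [TopologicalSpace X] (S : Set X) (v : X → ℝ) : Prop :=
  ∀ c, ∀ x ∈ S, ∀ y ∈ S, c < v x → c < v y → JoinedIn {z ∈ S | c < v z} x y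

theorem PathQuasiconcaveOn.congr {X : Type*} [TopologicalSpace X] {S : Set X} {v w : X → ℝ}
    (h : PathQuasiconcaveOn S v) (hvw : EqOn v w S) : PathQuasiconcaveOn S w := by
  intro c x hx y hy hcx hcy
  rw [← hvw hx] at hcx
  rw [← hvw hy] at hcy
  exact (h c x hx y hy hcx hcy).mono fun z hz ↦ ⟨hz.1, hvw hz.1 ▸ hz.2⟩

theorem PathQuasiconcaveOn.image {X Y : Type*} [TopologicalSpace X] [TopologicalSpace Y]
    {S : Set X} {g : X → Y} {v : Y → ℝ} (h : PathQuasiconcaveOn S (v ∘ g)) (hg : ContinuousOn g S) :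
    PathQuasiconcaveOn (g '' S) v := by
  rintro c _ ⟨x, hx, rfl⟩ _ ⟨y, hy, rfl⟩ hcx hcy
  refine ((h c x hx y hy hcx hcy).map_continuousOn (hg.mono (sep_subset S _))).mono ?_
  rintro _ ⟨z, hz, rfl⟩
  exact ⟨mem_image_of_mem g hz.1, hz.2⟩

section FiniteDimensional

variable {E : Type*} [NormedAddCommGroup E] [NormedSpace ℝ E] [FiniteDimensional ℝ E] {Ω : Set E}

theorem eventually_exists_joinedIn_frontier (hΩ : IsOpen Ω) {m : E} (hm : m ∈ frontier Ω)
    {W : Set E} (hW : W ∈ 𝓝[closure Ω] m) :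
    ∀ᶠ a in 𝓝[Ω] m, ∃ q ∈ frontier Ω, JoinedIn (closure Ω ∩ W) a q := by
  obtain ⟨ε, hε, hball⟩ := Metric.mem_nhdsWithin_iff.1 hW
  filter_upwards [self_mem_nhdsWithin, nhdsWithin_le_nhds (ball_mem_nhds m (half_pos hε))]
    with a haΩ ham
  rw [hΩ.frontier_eq] at hm
  obtain ⟨q, hq, hqa⟩ := exists_mem_frontier_infDist_compl_eq_dist haΩ
    ((ne_univ_iff_exists_notMem Ω).2 ⟨m, hm.2⟩)
  have hqm : dist q a < ε / 2 := by
    rw [dist_comm, ← hqa]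
    exact (infDist_le_dist_of_mem hm.2).trans_lt ham
  have hclosure : segment ℝ a q ⊆ closure Ω :=
    ((convex_closedBall a _).segment_subset (mem_closedBall_self infDist_nonneg)
      (mem_closedBall'.2 hqa.ge)).trans (closedBall_infDist_compl_subset_closure haΩ)
  have hnear : segment ℝ a q ⊆ ball m ε :=
    (convex_ball m ε).segment_subset (ball_subset_ball (half_le_self hε.le) ham) <|
      mem_ball.2 ((dist_triangle q a m).trans_lt (by linarith [mem_ball.1 ham]))
  exact ⟨q, hq, .of_segment_subset (subset_inter hclosure fun z hz ↦ hball ⟨hnear hz, hclosure hz⟩)⟩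

variable {v : E → ℝ}

theorem exists_mem_frontier_mem_closure_pathComponentIn (hΩ : IsOpen Ω)
    (hΩb : Bornology.IsBounded Ω) (hv : ContinuousOn v (closure Ω))
    (hmax : ∀ p ∈ Ω, ¬ IsLocalMax v p) {c : ℝ} {a : E} (ha : a ∈ Ω) (hca : c < v a) :
    ∃ m ∈ frontier Ω, c < v m ∧ m ∈ closure (pathComponentIn (Ω ∩ v ⁻¹' Ioi c) a) := by
  set U := Ω ∩ v ⁻¹' Ioi c
  have hUo : IsOpen U := (hv.mono subset_closure).isOpen_inter_preimage hΩ isOpen_Ioi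
  have haA : a ∈ pathComponentIn U a := mem_pathComponentIn_self ⟨ha, hca⟩
  have hcl : closure (pathComponentIn U a) ⊆ closure Ω :=
    closure_mono (pathComponentIn_subset.trans inter_subset_left)
  have hcomp : IsCompact (closure (pathComponentIn U a)) :=
    hΩb.isCompact_closure.of_isClosed_subset isClosed_closure hcl
  obtain ⟨m, hm, hmmax⟩ := hcomp.exists_isMaxOn ⟨a, subset_closure haA⟩ (hv.mono hcl)
  have hcm : c < v m := hca.trans_le (hmmax (subset_closure haA))
  refine ⟨m, hΩ.frontier_eq ▸ ⟨hcl hm, fun hmΩ ↦ hmax m hmΩ ?_⟩, hcm, hm⟩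
  have hmU : m ∈ U := ⟨hmΩ, hcm⟩
  have hmA : pathComponentIn U m ∈ 𝓝 m :=
    (hUo.pathComponentIn m).mem_nhds (mem_pathComponentIn_self hmU)
  obtain ⟨z, hzm, hza⟩ := mem_closure_iff_nhds.1 hm _ hmA
  filter_upwards [hmA] with w hw
  exact hmmax (subset_closure ((hza.trans hzm.symm).trans hw))

theorem exists_frontier_joinedIn_superlevel (hΩ : IsOpen Ω)
    (hΩb : Bornology.IsBounded Ω) (hv : ContinuousOn v (closure Ω))
    (hmax : ∀ p ∈ Ω, ¬ IsLocalMax v p) {c : ℝ} {a : E} (ha : a ∈ closure Ω) (hca : c < v a) :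
    ∃ q ∈ frontier Ω, JoinedIn {z ∈ closure Ω | c < v z} a q := by
  by_cases haΩ : a ∈ Ω
  · obtain ⟨m, hm, hcm, hmA⟩ :=
      exists_mem_frontier_mem_closure_pathComponentIn hΩ hΩb hv hmax haΩ hca
    have hW : {z | c < v z} ∈ 𝓝[closure Ω] m :=
      (hv m (frontier_subset_closure hm)).eventually_const_lt hcm
    obtain ⟨b, hbA, hb⟩ := ((mem_closure_iff_frequently.1 hmA).and_eventually
      (eventually_nhdsWithin_iff.1 (eventually_exists_joinedIn_frontier hΩ hm hW))).exists
    obtain ⟨q, hq, hbq⟩ := hb (pathComponentIn_subset hbA).1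
    exact ⟨q, hq, JoinedIn.trans (hbA.mono fun z hz ↦ ⟨subset_closure hz.1, hz.2⟩) hbq⟩
  · exact ⟨a, hΩ.frontier_eq ▸ ⟨ha, haΩ⟩, .refl ⟨ha, hca⟩⟩

theorem PathQuasiconcaveOn.closure_of_frontier (hΩ : IsOpen Ω)
    (hΩb : Bornology.IsBounded Ω) (hv : ContinuousOn v (closure Ω))
    (hmax : ∀ p ∈ Ω, ¬ IsLocalMax v p) (h : PathQuasiconcaveOn (frontier Ω) v) :
    PathQuasiconcaveOn (closure Ω) v := by
  intro c x hx y hy hcx hcy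
  obtain ⟨q, hq, hxq⟩ := exists_frontier_joinedIn_superlevel hΩ hΩb hv hmax hx hcx
  obtain ⟨q', hq', hyq'⟩ := exists_frontier_joinedIn_superlevel hΩ hΩb hv hmax hy hcy
  have hqq' : JoinedIn {z ∈ closure Ω | c < v z} q q' :=
    (h c q hq q' hq' hxq.target_mem.2 hyq'.target_mem.2).mono
      fun z hz ↦ ⟨frontier_subset_closure hz.1, hz.2⟩
  exact (hxq.trans hqq').trans hyq'.symm

end FiniteDimensional

/-! ### Radó's theorem -/

theorem fderiv_ne_zero_of_pathQuasiconcaveOn_frontier {v : ℂ → ℝ} {Ω : Set ℂ} (hΩ : IsOpen Ω)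
    (hΩb : Bornology.IsBounded Ω) (hv : HarmonicOnNhd v Ω) (hvc : ContinuousOn v (closure Ω))
    (hnc : ∀ p ∈ Ω, ¬ ∀ᶠ z in 𝓝 p, v z = v p) (hq : PathQuasiconcaveOn (frontier Ω) v)
    (hq' : PathQuasiconcaveOn (frontier Ω) (-v)) {p : ℂ} (hp : p ∈ Ω) : fderiv ℝ v p ≠ 0 := by
  intro hcrit
  obtain ⟨r, hr, θ, hθ, hθ₃, hrΩ, hpos, hneg⟩ :=
    exists_alternating_segments_of_fderiv_eq_zero (hv p hp) (hnc p hp) hcrit (hΩ.mem_nhds hp)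
  have hmax : ∀ q ∈ Ω, ¬ IsLocalMax v q := fun q hqΩ ↦
    not_isLocalMax_of_harmonicAt (hv q hqΩ) (hnc q hqΩ)
  have hmax' : ∀ q ∈ Ω, ¬ IsLocalMax (-v) q := fun q hqΩ ↦
    not_isLocalMax_of_harmonicAt (hv q hqΩ).neg (by simpa using hnc q hqΩ)
  have hend (k : Fin 4) := right_mem_segment ℝ p (circleMap p r (θ k))
  have hne (k : Fin 4) : circleMap p r (θ k) ≠ p := circleMap_ne_center hr
  have hmem (k : Fin 4) : circleMap p r (θ k) ∈ closure Ω := subset_closure (hrΩ k)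
  have hjoin : JoinedIn {z ∈ closure Ω | v p < v z}
      (circleMap p r (θ 0)) (circleMap p r (θ 2)) :=
    hq.closure_of_frontier hΩ hΩb hvc hmax _ _ (hmem 0) _ (hmem 2)
      (hpos 0 (by simp) _ (hend 0) (hne 0)) (hpos 2 (by simp) _ (hend 2) (hne 2))
  have hjoin' : JoinedIn {z ∈ closure Ω | (-v) p < (-v) z}
      (circleMap p r (θ 1)) (circleMap p r (θ 3)) :=
    hq'.closure_of_frontier hΩ hΩb hvc.neg hmax' _ _ (hmem 1) _ (hmem 3)
      (neg_lt_neg (hneg 1 (by simp) _ (hend 1) (hne 1)))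
      (neg_lt_neg (hneg 3 (by simp) _ (hend 3) (hne 3)))
  refine not_joinedIn_of_alternating ?_ hr hθ hθ₃ (fun k hk ↦ ?_) (fun k hk ↦ ?_) hjoin hjoin'
  · exact disjoint_left.2 fun z hz hz' ↦ (neg_lt_neg_iff.1 hz'.2).not_gt hz.2
  · exact disjoint_left.2 fun z hz hzk ↦ (hneg k hk z hzk (ne_of_apply_ne v hz.2.ne')).not_gt hz.2
  · exact disjoint_left.2 fun z hz hzk ↦
      (hpos k hk z hzk (ne_of_apply_ne (-v) hz.2.ne')).not_gt (neg_lt_neg_iff.1 hz.2)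

/-! ### Linear boundary values on the circle -/

theorem inner_exp_arg_add_mul_I (w : ℂ) (t : ℝ) :
    inner ℝ w (exp (↑(arg w + t) * I)) = ‖w‖ * Real.cos t := by
  have h : exp (↑(arg w + t) * I) * conj w = ‖w‖ * exp (t * I) := by
    nth_rw 2 [← norm_mul_exp_arg_mul_I w]
    rw [map_mul, conj_ofReal, ← exp_conj, map_mul, conj_ofReal, conj_I, mul_left_comm, ← exp_add]
    congr 2
    push_cast
    ring
  rw [Complex.inner, h, re_ofReal_mul, exp_ofReal_mul_I_re]

theorem exists_abs_le_pi_exp_add_mul_I_eq {z : ℂ} (hz : z ∈ sphere (0 : ℂ) 1) (φ : ℝ) :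
    ∃ t : ℝ, |t| ≤ Real.pi ∧ exp (↑(φ + t) * I) = z := by
  refine ⟨arg (z * exp (-φ * I)), abs_arg_le_pi _, ?_⟩
  have hnorm : ‖z * exp (-φ * I)‖ = 1 := by
    rw [norm_mul, mem_sphere_zero_iff_norm.1 hz, ← ofReal_neg, norm_exp_ofReal_mul_I, one_mul]
  have harg := norm_mul_exp_arg_mul_I (z * exp (-φ * I))
  rw [hnorm, ofReal_one, one_mul] at harg
  rw [ofReal_add, add_mul, exp_add, harg, mul_left_comm, ← exp_add]
  simp

theorem pathQuasiconcaveOn_sphere_inner (w : ℂ) :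
    PathQuasiconcaveOn (sphere (0 : ℂ) 1) fun z ↦ inner ℝ w z := by
  set e : ℝ → ℂ := fun t ↦ exp (↑(arg w + t) * I)
  have hpole (c : ℝ) {z : ℂ} (hz : z ∈ sphere (0 : ℂ) 1) (hcz : c < inner ℝ w z) :
      JoinedIn {z ∈ sphere (0 : ℂ) 1 | c < inner ℝ w z} (e 0) z := by
    obtain ⟨s, hs, rfl⟩ := exists_abs_le_pi_exp_add_mul_I_eq hz (arg w)
    rw [inner_exp_arg_add_mul_I] at hcz
    have hmaps : MapsTo e (uIcc 0 s) {z ∈ sphere (0 : ℂ) 1 | c < inner ℝ w z} := by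
      intro t ht
      have hts : |t| ≤ |s| := by simpa using abs_sub_left_of_mem_uIcc ht
      refine ⟨mem_sphere_zero_iff_norm.2 (norm_exp_ofReal_mul_I _), ?_⟩
      rw [inner_exp_arg_add_mul_I, ← Real.cos_abs t]
      rw [← Real.cos_abs s] at hcz
      refine hcz.trans_le (mul_le_mul_of_nonneg_left ?_ (norm_nonneg w))
      exact Real.cos_le_cos_of_nonneg_of_le_pi (abs_nonneg t) hs hts
    have hcont : Continuous e := by fun_prop
    exact (((convex_uIcc 0 s).isPathConnected ⟨0, left_mem_uIcc⟩).joinedIn 0 left_mem_uIcc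
      s right_mem_uIcc |>.map_continuousOn hcont.continuousOn).mono hmaps.image_subset
  exact fun c x hx y hy hcx hcy ↦ (hpole c hx hcx).symm.trans (hpole c hy hcy)

theorem not_eqOn_const_sphere_inner {E : Type*} [NormedAddCommGroup E] [InnerProductSpace ℝ E]
    {w : E} (hw : w ≠ 0) (c : ℝ) :
    ¬ EqOn (fun z ↦ inner ℝ w z) (fun _ ↦ c) (sphere 0 1) := by
  intro h
  have hunit : ‖w‖⁻¹ • w ∈ sphere (0 : E) 1 :=
    mem_sphere_zero_iff_norm.2 (norm_smul_inv_norm hw)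
  have hneg : -(‖w‖⁻¹ • w) ∈ sphere (0 : E) 1 := by simpa using hunit
  have heq : inner ℝ w (‖w‖⁻¹ • w) = -inner ℝ w (‖w‖⁻¹ • w) :=
    (h hunit).trans ((h hneg).symm.trans (inner_neg_right _ _))
  have hzero : inner ℝ w (‖w‖⁻¹ • w) = 0 := by linarith
  simp [real_inner_smul_right, hw] at hzero

theorem fderiv_ne_zero_of_eqOn_inner {v : ℂ → ℝ} {Ω : Set ℂ} (hΩo : IsOpen Ω)
    (hΩb : Bornology.IsBounded Ω) (hΩc : IsPreconnected Ω) {γ : ℂ → ℂ}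
    (hγ : ContinuousOn γ (sphere 0 1)) (hΓ : frontier Ω = γ '' sphere 0 1)
    (hv : HarmonicOnNhd v Ω) (hvc : ContinuousOn v (closure Ω)) {w : ℂ} (hw : w ≠ 0)
    (hb : EqOn (v ∘ γ) (fun z ↦ inner ℝ w z) (sphere 0 1)) {p : ℂ} (hp : p ∈ Ω) :
    fderiv ℝ v p ≠ 0 := by
  have hq : PathQuasiconcaveOn (frontier Ω) v :=
    hΓ ▸ ((pathQuasiconcaveOn_sphere_inner w).congr hb.symm).image hγ
  have hq' : PathQuasiconcaveOn (frontier Ω) (-v) := by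
    refine hΓ ▸ ((pathQuasiconcaveOn_sphere_inner (-w)).congr fun z hz ↦ ?_).image hγ
    exact (inner_neg_left w z).trans (congrArg Neg.neg (hb hz).symm)
  refine fderiv_ne_zero_of_pathQuasiconcaveOn_frontier hΩo hΩb hv hvc (fun q hqΩ hconst ↦ ?_)
    hq hq' hp
  have hvq : EqOn v (fun _ ↦ v q) (closure Ω) :=
    eqOn_closure_of_harmonicOnNhd_of_eventually_eq hΩc hv hvc hqΩ hconst
  exact not_eqOn_const_sphere_inner hw (v q) fun z hz ↦ (hb hz).symm.trans <|
    hvq (frontier_subset_closure (hΓ ▸ mem_image_of_mem γ hz))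

theorem gradient_smul_add_smul {F : Type*} [NormedAddCommGroup F] [InnerProductSpace ℝ F]
    [CompleteSpace F] {f g : F → ℝ} {x : F} (hf : DifferentiableAt ℝ f x)
    (hg : DifferentiableAt ℝ g x) (a b : ℝ) :
    gradient (a • f + b • g) x = a • gradient f x + b • gradient g x := by
  simp only [gradient, fderiv_add (hf.const_smul a) (hg.const_smul b), fderiv_const_smul hf,
    fderiv_const_smul hg, map_add, map_smul]

theorem stmt_6_general (Ω : Set ℂ) (hΩo : IsOpen Ω) (hΩb : Bornology.IsBounded Ω)
    (hΩc : IsPreconnected Ω) (γ : ℂ → ℂ) (hγ : ContinuousOn γ (sphere (0 : ℂ) 1))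
    (hΓ : frontier Ω = γ '' sphere (0 : ℂ) 1) (ξ η : ℂ → ℝ)
    (hξc : ContinuousOn ξ (closure Ω)) (hηc : ContinuousOn η (closure Ω))
    (hξh : HarmonicOnSet ξ Ω) (hηh : HarmonicOnSet η Ω)
    (hξb : ∀ θ : ℝ, ξ (γ (exp (θ * I))) = Real.cos θ)
    (hηb : ∀ θ : ℝ, η (γ (exp (θ * I))) = Real.sin θ)
    (α β : ℝ) (hαβ : (α, β) ≠ (0, 0)) (p : ℂ) (hp : p ∈ Ω) :
    α • gradient ξ p + β • gradient η p ≠ 0 := by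
  have hξN := hξh.harmonicOnNhd hΩo
  have hηN := hηh.harmonicOnNhd hΩo
  have hu : HarmonicOnNhd (α • ξ + β • η) Ω := hξN.const_smul.add hηN.const_smul
  have huc : ContinuousOn (α • ξ + β • η) (closure Ω) := (hξc.const_smul α).add (hηc.const_smul β)
  have hw : (⟨α, β⟩ : ℂ) ≠ 0 := fun h ↦ hαβ (by simpa [Complex.ext_iff] using h)
  have hub : EqOn ((α • ξ + β • η) ∘ γ) (fun z ↦ inner ℝ (⟨α, β⟩ : ℂ) z) (sphere 0 1) := by
    intro z hz
    obtain ⟨θ, -, rfl⟩ := exists_abs_le_pi_exp_add_mul_I_eq hz 0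
    rw [zero_add]
    simp [Complex.inner, hξb, hηb, exp_ofReal_mul_I_re, exp_ofReal_mul_I_im, mul_comm α,
      mul_comm β]
  rw [← gradient_smul_add_smul ((hξN p hp).1.differentiableAt two_ne_zero)
    ((hηN p hp).1.differentiableAt two_ne_zero), gradient,
    map_ne_zero_iff _ (LinearIsometryEquiv.injective _)]
  exact fderiv_ne_zero_of_eqOn_inner hΩo hΩb hΩc hγ hΓ hu huc hw hub hp

theorem stmt_6 (Ω : Set ℂ) (hΩo : IsOpen Ω) (hΩb : Bornology.IsBounded Ω)
    (hΩsc : SimplyConnectedSpace Ω)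
    (γ : ℂ → ℂ) (hγinj : Set.InjOn γ (Metric.sphere (0 : ℂ) 1))
    (hγC2 : ContDiffOn ℝ 2 γ (Metric.sphere (0 : ℂ) 1))
    (hΓ : frontier Ω = γ '' Metric.sphere (0 : ℂ) 1)
    (ξ η : ℂ → ℝ)
    (hξc : ContinuousOn ξ (closure Ω)) (hηc : ContinuousOn η (closure Ω))
    (hξh : HarmonicOnSet ξ Ω) (hηh : HarmonicOnSet η Ω)
    (hξb : ∀ θ : ℝ, ξ (γ (Complex.exp (θ * Complex.I))) = Real.cos θ)
    (hηb : ∀ θ : ℝ, η (γ (Complex.exp (θ * Complex.I))) = Real.sin θ) :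
    ∀ (α β : ℝ), (α, β) ≠ ((0 : ℝ), (0 : ℝ)) →
      ∀ p ∈ Ω, α • gradient ξ p + β • gradient η p ≠ 0 :=
  stmt_6_general Ω hΩo hΩb
    (isPathConnected_iff_pathConnectedSpace.2 inferInstance).isConnected.isPreconnected γ
    hγC2.continuousOn hΓ ξ η hξc hηc hξh hηh hξb hηb
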